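/- For any disjunctive logic program Π, any set U of atoms that is unfounded on a consistent set L of literals with respect to Π, and any consistent and complete set M of literals over atoms(Π): if L ⊆ M and M ∩ U ≠ ∅, then M is not a stable model of Π. -/

import Mathlib

open scoped Classical

namespace AbstractSolvers

/-- Literals over atoms (natural numbers): an atom `a` or its negation `¬ a`. -/
inductive Lit where
  | pos : ℕ → Lit
  | neg : ℕ → Lit
deriving DecidableEq

/-- The complement of a literal. -/
def Lit.comp : Lit → Lit
  | .pos a => .neg a
  | .neg a => .pos a

/-- The atom of a literal. -/
def Lit.atom : Lit → ℕ
  | .pos a => a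
  | .neg a => a

def Lit.isPos : Lit → Bool
  | .pos _ => true
  | .neg _ => false

/-- A disjunctive rule `A ← B`: a head `A` (disjunction of atoms) and a body with a
positive part (atoms) and a negative part (atoms under negation as failure). -/
structure Rule where
  head : Finset ℕ
  pos : Finset ℕ
  neg : Finset ℕ
deriving DecidableEq

/-- A disjunctive logic program: a finite set of disjunctive rules. -/
abbrev Prog := Finset Rule

def Rule.atoms (r : Rule) : Finset ℕ := r.head ∪ r.pos ∪ r.neg

/-- The atoms occurring in a program. -/
def progAtoms (π : Prog) : Finset ℕ := π.sup Rule.atoms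

/-- The atoms occurring in a set of literals. -/
def atomsOfSet (M : Set Lit) : Set ℕ := Lit.atom '' M

/-- A set of literals is consistent if it contains no literal together with its complement. -/
def consistentSet (M : Set Lit) : Prop := ∀ l ∈ M, Lit.comp l ∉ M

/-- `M⁺`: the atoms occurring positively in `M`. -/
def posAtoms (M : Set Lit) : Set ℕ := {a | Lit.pos a ∈ M}

/-- The restriction of a set of literals to a set of atoms. -/
def restrictTo (M : Set Lit) (X : Set ℕ) : Set Lit := {l | l ∈ M ∧ Lit.atom l ∈ X}

/-- `M` is a complete set of literals over `X` if the atoms of `M` are exactly `X`. -/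
def completeOver (M : Set Lit) (X : Set ℕ) : Prop := atomsOfSet M = X

/-- The clause `A ∨ B̄` corresponding to a rule `A ← B` (as its set of literals). -/
def Rule.clause (r : Rule) : Set Lit :=
  (Lit.pos '' ↑r.head) ∪ (Lit.neg '' ↑r.pos) ∪ (Lit.pos '' ↑r.neg)

/-- `M` satisfies the rule `r` viewed as a clause. -/
def satRule (M : Set Lit) (r : Rule) : Prop := ∃ l ∈ Rule.clause r, l ∈ M

/-- A classical model of a program: a consistent and complete set of literals over the atoms
of the program satisfying every rule viewed as a clause. -/
def claModel (π : Prog) (M : Set Lit) : Prop :=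
  consistentSet M ∧ completeOver M ↑(progAtoms π) ∧ ∀ r ∈ π, satRule M r

/-- `r` (of the form `A ∨ a ← B`) is a supporting rule for `a` with respect to `M`
when `M ∩ (B̄ ∪ A) = ∅`. -/
def supportingRule (r : Rule) (a : ℕ) (M : Set Lit) : Prop :=
  a ∈ r.head ∧ (∀ b ∈ r.pos, Lit.neg b ∉ M) ∧ (∀ b ∈ r.neg, Lit.pos b ∉ M) ∧
    ∀ b ∈ r.head, b ≠ a → Lit.pos b ∉ M

/-- A supported model of a program. -/
def supModel (π : Prog) (M : Set Lit) : Prop :=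
  claModel π M ∧ ∀ a, Lit.pos a ∈ M → ∃ r ∈ π, supportingRule r a M

/-- `X` satisfies the reduct `π^Y`. -/
def satReduct (π : Prog) (Y X : Set ℕ) : Prop :=
  ∀ r ∈ π, (∀ b ∈ r.neg, b ∉ Y) → (∀ b ∈ r.pos, b ∈ X) → ∃ a ∈ r.head, a ∈ X

/-- `X` is an answer set of `π`: `X` is minimal among the sets of atoms satisfying `π^X`. -/
def answerSet (π : Prog) (X : Set ℕ) : Prop :=
  satReduct π X X ∧ ∀ Y ⊆ X, satReduct π X Y → Y = X

/-- A stable model of a program: a consistent and complete set `M` of literals over the atoms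
of the program such that `M⁺` is an answer set. -/
def staModel (π : Prog) (M : Set Lit) : Prop :=
  consistentSet M ∧ completeOver M ↑(progAtoms π) ∧ answerSet π (posAtoms M)

/-- `X` is unfounded on `L` with respect to `π`. -/
def unfounded (π : Prog) (L : Set Lit) (X : Set ℕ) : Prop :=
  ∀ a ∈ X, ∀ r ∈ π, a ∈ r.head →
    ((∃ b ∈ r.pos, Lit.neg b ∈ L) ∨ (∃ b ∈ r.neg, Lit.pos b ∈ L)) ∨
    (∃ b ∈ r.pos, b ∈ X) ∨
    (∃ b ∈ r.head, b ∉ X ∧ Lit.pos b ∈ L)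

/-- The three types of models: classical, supported-, and stable. -/
inductive MType where
  | cla | sup | sta

/-- `w`-models. -/
def isModel : MType → Prog → Set Lit → Prop
  | .cla => claModel
  | .sup => supModel
  | .sta => staModel

/-- A propagator condition (`p-condition`) maps a program and a set of literals to a set of
literals. -/
abbrev PCond := Prog → Set Lit → Set Lit

/-- A p-condition yields literals over the atoms of the program. -/
def isPCondition (p : PCond) : Prop :=
  ∀ (π : Prog) (M : Set Lit), ∀ l ∈ p π M, Lit.atom l ∈ progAtoms π

/-- The union of the outcomes of a set of p-conditions. -/
def pcOut (P : Set PCond) (π : Prog) (M : Set Lit) : Set Lit := ⋃ p ∈ P, p π M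

/-- The `UnitPropagate` p-condition. -/
def unitPropagate : PCond := fun π L =>
  {l | l ∉ L ∧ ∃ r ∈ π, l ∈ Rule.clause r ∧ ∀ l' ∈ Rule.clause r, l' ≠ l → Lit.comp l' ∈ L}

/-- The `AllRulesCancelled` p-condition. -/
def allRulesCancelled : PCond := fun π L =>
  {l | ∃ a, l = Lit.neg a ∧ Lit.neg a ∉ L ∧ ∀ r ∈ π, ¬ supportingRule r a L}

/-- The `BackchainTrue` p-condition. -/
def backchainTrue : PCond := fun π L =>
  {l | l ∉ L ∧ ∃ r ∈ π, ∃ a ∈ r.head, Lit.pos a ∈ L ∧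
    ((∃ b ∈ r.head, b ≠ a ∧ l = Lit.neg b) ∨ (∃ b ∈ r.pos, l = Lit.pos b) ∨
      (∃ b ∈ r.neg, l = Lit.neg b)) ∧
    ∀ r' ∈ π, r' ≠ r → ¬ supportingRule r' a L}

/-- The `Unfounded` p-condition. -/
def unfoundedCond : PCond := fun π L =>
  {l | ∃ a, l = Lit.neg a ∧ Lit.neg a ∉ L ∧ consistentSet L ∧
    ∃ X : Set ℕ, a ∈ X ∧ unfounded π L X}

/-- `up = {UnitPropagate}`. -/
def up : Set PCond := {unitPropagate}

/-- `sd = {UnitPropagate, AllRulesCancelled, BackchainTrue}`. -/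
def sd : Set PCond := {unitPropagate, allRulesCancelled, backchainTrue}

/-- `sm = {UnitPropagate, AllRulesCancelled, BackchainTrue, Unfounded}`. -/
def sm : Set PCond := {unitPropagate, allRulesCancelled, backchainTrue, unfoundedCond}

/-- `P` is `w`-sound. -/
def wSound (w : MType) (P : Set PCond) : Prop :=
  ∀ (π : Prog) (M M₁ : Set Lit), isModel w π M₁ → M ⊆ M₁ → pcOut P π M ⊆ M₁

/-- `P` is `w`-complete. -/
def wComplete (w : MType) (P : Set PCond) : Prop :=
  ∀ (π : Prog) (M : Set Lit), consistentSet M → completeOver M ↑(progAtoms π) →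
    (isModel w π M ↔ pcOut P π M = ∅)

/-- `P` is `w`-enforcing: both `w`-sound and `w`-complete. -/
def wEnforcing (w : MType) (P : Set PCond) : Prop := wSound w P ∧ wComplete w P

abbrev GenFun := Prog → Prog
abbrev WitFun := Prog → Set Lit → Prog

/-- `M` covers `π` when `atoms(π) ⊆ atoms(M)`. -/
def covers (M : Set Lit) (π : Prog) : Prop := (↑(progAtoms π) : Set ℕ) ⊆ atomsOfSet M

/-- A generating (program) function. -/
def isGenFun (g : GenFun) : Prop :=
  ∀ π : Prog, (↑(progAtoms π) : Set ℕ) ⊆ (↑(progAtoms (g π)) : Set ℕ)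

/-- A witness (program) function: on consistent covering sets of literals it yields
a non-disjunctive program. -/
def isWitFun (t : WitFun) : Prop :=
  ∀ (π : Prog) (M : Set Lit), consistentSet M → covers M π → ∀ r ∈ t π M, r.head.card ≤ 1

/-- `g` is `w₁`-approximating with respect to `w`. -/
def approximating (w₁ w : MType) (g : GenFun) : Prop :=
  ∀ π : Prog,
    (∀ L, staModel π L → ∃ L₁, isModel w₁ (g π) L₁ ∧ L = restrictTo L₁ ↑(progAtoms π)) ∧
    (∀ M, isModel w₁ (g π) M → isModel w π (restrictTo M ↑(progAtoms π)))

/-- `t` is `w₁`-ensuring with respect to `w`. -/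
def ensuring (w₁ w : MType) (t : WitFun) : Prop :=
  ∀ (π : Prog) (M : Set Lit), covers M π →
    isModel w π (restrictTo M ↑(progAtoms π)) →
    (staModel π (restrictTo M ↑(progAtoms π)) ↔ ¬ ∃ N, isModel w₁ (t π M) N)

/-- `(P, g)` is an approximating-pair with respect to `w`. -/
def approximatingPair (w : MType) (P : Set PCond) (g : GenFun) : Prop :=
  ∃ w₁, wEnforcing w₁ P ∧ approximating w₁ w g

/-- `(P, t)` is an ensuring-pair with respect to `w`. -/
def ensuringPair (w : MType) (P : Set PCond) (t : WitFun) : Prop :=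
  ∃ w₁, wEnforcing w₁ P ∧ ensuring w₁ w t

/-- An element of a record: a literal annotated as decision (`true`) or not, or `⊥`. -/
inductive RElem where
  | lit : Lit → Bool → RElem
  | bot : RElem
deriving DecidableEq

/-- A record is a string (list) of such elements. -/
abbrev Record := List RElem

def RElem.content : RElem → Option Lit
  | .lit l _ => some l
  | .bot => none

/-- The literal `l` occurs in the record `L` (possibly as a decision literal). -/
def Record.hasLit (L : Record) (l : Lit) : Prop := ∃ d, RElem.lit l d ∈ L

/-- The set of literals of a record. -/
def Record.lits (L : Record) : Set Lit := {l | Record.hasLit L l}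

/-- A record is inconsistent if it contains `⊥` or complementary literals. -/
def Record.incons (L : Record) : Prop :=
  RElem.bot ∈ L ∨ ∃ l, Record.hasLit L l ∧ Record.hasLit L (Lit.comp l)

/-- The record contains no decision literals. -/
def Record.noDec (L : Record) : Prop := ∀ l, RElem.lit l true ∉ L

/-- A record relative to the set `X` of atoms: no repetitions, and all literals over `X`. -/
def Record.wf (L : Record) (X : Set ℕ) : Prop :=
  (L.map RElem.content).Nodup ∧ ∀ l, Record.hasLit L l → Lit.atom l ∈ X

/-- An abstract transition graph, with a distinguished initial node, a `Failstate`,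
and `Ok(L)` nodes. -/
structure AbsGraph (σ : Type) where
  nodes : Set σ
  step : σ → σ → Prop
  init : σ
  fail : σ
  okP : σ → Prop
  okLits : σ → Set Lit

/-- The edges of the graph: steps between nodes of the graph. -/
def AbsGraph.edge {σ : Type} (G : AbsGraph σ) (s s' : σ) : Prop :=
  s ∈ G.nodes ∧ s' ∈ G.nodes ∧ G.step s s'

/-- The atoms of a family of sets of literals. -/
def atomsOfFam (N : Set (Set Lit)) : Set ℕ := ⋃ M ∈ N, atomsOfSet M

/-- The graph `G` checks the set `N` of sets of literals. -/
def checks {σ : Type} (G : AbsGraph σ) (N : Set (Set Lit)) : Prop :=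
  G.nodes.Finite ∧
  (∀ s : σ, ¬ Relation.TransGen G.edge s s) ∧
  (∀ s ∈ G.nodes, (∀ s', ¬ G.edge s s') → s = G.fail ∨ G.okP s) ∧
  (∀ s : σ, Relation.ReflTransGen G.edge G.init s → G.okP s →
    restrictTo (G.okLits s) (atomsOfFam N) ∈ N) ∧
  (Relation.ReflTransGen G.edge G.init G.fail ↔ N = ∅)

/-- Applicability of the `Conclude` rule. -/
def concludeApp (L : Record) : Prop := Record.incons L ∧ Record.noDec L

/-- Applicability of the `Backtrack` rule. -/
def backtrackApp (L : Record) : Prop :=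
  ∃ L₁ l L₂, L = L₁ ++ RElem.lit l true :: L₂ ∧ Record.incons L ∧ Record.noDec L₂

/-- Applicability of the `Propagate` rule for the set `P` of p-conditions. -/
def propagateApp (P : Set PCond) (π : Prog) (L : Record) : Prop :=
  ∃ l, l ∈ pcOut P π (Record.lits L)

/-- Applicability of the `Decide` rule over the atoms `X`. -/
def decideApp (X : Finset ℕ) (L : Record) : Prop :=
  ¬ Record.incons L ∧ ∃ l : Lit, Lit.atom l ∈ X ∧ ¬ Record.hasLit L l ∧
    ¬ Record.hasLit L (Lit.comp l)

/-- Basic states: records, `Ok(L)` states, and the `Failstate`. -/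
inductive BState where
  | rcd : Record → BState
  | ok : Record → BState
  | fail : BState

/-- The transition rules of the single-layer DPLL graph template `DPT_P(π)`
(`Conclude`, `Backtrack`, `Propagate`, `Decide`, `Success`). -/
inductive dptStep (P : Set PCond) (π : Prog) : BState → BState → Prop
  | conclude (L : Record) : Record.incons L → Record.noDec L →
      dptStep P π (BState.rcd L) BState.fail
  | backtrack (L₁ : Record) (l : Lit) (L₂ : Record) :
      Record.incons (L₁ ++ RElem.lit l true :: L₂) → Record.noDec L₂ →
      dptStep P π (BState.rcd (L₁ ++ RElem.lit l true :: L₂))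
        (BState.rcd (L₁ ++ [RElem.lit (Lit.comp l) false]))
  | propagate (L : Record) (l : Lit) : l ∈ pcOut P π (Record.lits L) →
      dptStep P π (BState.rcd L) (BState.rcd (L ++ [RElem.lit l false]))
  | decide (L : Record) (l : Lit) : ¬ Record.incons L → Lit.atom l ∈ progAtoms π →
      ¬ Record.hasLit L l → ¬ Record.hasLit L (Lit.comp l) →
      dptStep P π (BState.rcd L) (BState.rcd (L ++ [RElem.lit l true]))
  | success (L : Record) :
      ¬ (concludeApp L ∨ backtrackApp L ∨ propagateApp P π L ∨ decideApp (progAtoms π) L) →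
      dptStep P π (BState.rcd L) (BState.ok L)

/-- The single-layer DPLL graph template `DPT_P(π)`; with `P = up` it is the graph `DP_π`. -/
def DPT (P : Set PCond) (π : Prog) : AbsGraph BState where
  nodes := {s | match s with
    | BState.rcd L => Record.wf L ↑(progAtoms π)
    | BState.ok L => Record.wf L ↑(progAtoms π)
    | BState.fail => True}
  step := dptStep P π
  init := BState.rcd []
  fail := BState.fail
  okP := fun s => ∃ L, s = BState.ok L
  okLits := fun s => match s with
    | BState.ok L => Record.lits L
    | BState.rcd L => Record.lits L
    | BState.fail => ∅

/-- States of the two-layer graph: `(L,R)_s` (label `true` = 𝓛, `false` = 𝓡),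
`Ok(L)`, and `Failstate`. -/
inductive TLState where
  | st : Record → Record → Bool → TLState
  | ok : Record → TLState
  | fail : TLState

/-- `atoms(t, π, X)`: the union of the atoms of `t(π,L)` over all consistent and complete
sets `L` of literals over `X`. -/
def witAtoms (t : WitFun) (π : Prog) (X : Set ℕ) : Set ℕ :=
  ⋃ L ∈ {L : Set Lit | consistentSet L ∧ completeOver L X}, (↑(progAtoms (t π L)) : Set ℕ)

/-- Some left-rule applies to the state `(L, ∅)_𝓛`. -/
def leftApp (P : Set PCond) (gπ : Prog) (L : Record) : Prop :=
  concludeApp L ∨ backtrackApp L ∨ propagateApp P gπ L ∨ decideApp (progAtoms gπ) L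

/-- Some right-rule applies to the state `(L, R)_𝓡` (where `tπ` is the witness program
for `L`). -/
def rightApp (P : Set PCond) (tπ : Prog) (R : Record) : Prop :=
  concludeApp R ∨ backtrackApp R ∨ propagateApp P tπ R ∨ decideApp (progAtoms tπ) R

/-- The transition rules of the two-layer template graph `ST[PL, PR, g, t](π)`. -/
inductive tlStep (PL PR : Set PCond) (g : GenFun) (t : WitFun) (π : Prog) :
    TLState → TLState → Prop
  | concludeL (L : Record) : Record.incons L → Record.noDec L →
      tlStep PL PR g t π (TLState.st L [] true) TLState.fail
  | backtrackL (L₁ : Record) (l : Lit) (L₂ : Record) :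
      Record.incons (L₁ ++ RElem.lit l true :: L₂) → Record.noDec L₂ →
      tlStep PL PR g t π (TLState.st (L₁ ++ RElem.lit l true :: L₂) [] true)
        (TLState.st (L₁ ++ [RElem.lit (Lit.comp l) false]) [] true)
  | propagateL (L : Record) (l : Lit) : l ∈ pcOut PL (g π) (Record.lits L) →
      tlStep PL PR g t π (TLState.st L [] true)
        (TLState.st (L ++ [RElem.lit l false]) [] true)
  | decideL (L : Record) (l : Lit) : ¬ Record.incons L → Lit.atom l ∈ progAtoms (g π) →
      ¬ Record.hasLit L l → ¬ Record.hasLit L (Lit.comp l) →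
      tlStep PL PR g t π (TLState.st L [] true)
        (TLState.st (L ++ [RElem.lit l true]) [] true)
  | cross (L : Record) : ¬ leftApp PL (g π) L →
      tlStep PL PR g t π (TLState.st L [] true) (TLState.st L [] false)
  | concludeR (L R : Record) : Record.incons R → Record.noDec R →
      tlStep PL PR g t π (TLState.st L R false) (TLState.ok L)
  | backtrackR (L R₁ : Record) (l : Lit) (R₂ : Record) :
      Record.incons (R₁ ++ RElem.lit l true :: R₂) → Record.noDec R₂ →
      tlStep PL PR g t π (TLState.st L (R₁ ++ RElem.lit l true :: R₂) false)
        (TLState.st L (R₁ ++ [RElem.lit (Lit.comp l) false]) false)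
  | propagateR (L R : Record) (l : Lit) :
      l ∈ pcOut PR (t π (Record.lits L)) (Record.lits R) →
      tlStep PL PR g t π (TLState.st L R false)
        (TLState.st L (R ++ [RElem.lit l false]) false)
  | decideR (L R : Record) (l : Lit) : ¬ Record.incons R →
      Lit.atom l ∈ progAtoms (t π (Record.lits L)) →
      ¬ Record.hasLit R l → ¬ Record.hasLit R (Lit.comp l) →
      tlStep PL PR g t π (TLState.st L R false)
        (TLState.st L (R ++ [RElem.lit l true]) false)
  | concludeRL (L R : Record) : ¬ rightApp PR (t π (Record.lits L)) R → Record.noDec L →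
      tlStep PL PR g t π (TLState.st L R false) TLState.fail
  | backtrackRL (L₁ : Record) (l : Lit) (L₂ R : Record) :
      ¬ rightApp PR (t π (Record.lits (L₁ ++ RElem.lit l true :: L₂))) R →
      Record.noDec L₂ →
      tlStep PL PR g t π (TLState.st (L₁ ++ RElem.lit l true :: L₂) R false)
        (TLState.st (L₁ ++ [RElem.lit (Lit.comp l) false]) [] true)

/-- The two-layer template graph `ST[PL, PR, g, t](π)`. -/
def TL (PL PR : Set PCond) (g : GenFun) (t : WitFun) (π : Prog) : AbsGraph TLState where
  nodes := {s | match s with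
    | TLState.st L R _ => Record.wf L ↑(progAtoms (g π)) ∧
        Record.wf R (witAtoms t π ↑(progAtoms (g π)))
    | TLState.ok L => Record.wf L ↑(progAtoms (g π))
    | TLState.fail => True}
  step := tlStep PL PR g t π
  init := TLState.st [] [] true
  fail := TLState.fail
  okP := fun s => ∃ L, s = TLState.ok L
  okLits := fun s => match s with
    | TLState.ok L => Record.lits L
    | TLState.st L _ _ => Record.lits L
    | TLState.fail => ∅

/-- The rule corresponding to a clause with positive atoms `P` and negated atoms `N`,
under the identification of CNF formulas with programs. -/
def mkClause (P N : Finset ℕ) : Rule := ⟨∅, N, P⟩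

/-!
Deleting the unfounded atoms from `M⁺` keeps the reduct satisfied: if the body of a rule stays true
after the deletion, it is neither falsified by `M` nor meets `U`, so when the head loses an atom of
`U`, unfoundedness supplies another head atom in `M⁺`, outside `U`. Minimality of `M⁺` then forces
`M⁺` to be disjoint from `U`.
-/

section

variable {π : Prog} {U X : Set ℕ} {L M : Set Lit}

theorem unfounded.mono (hU : unfounded π L U) (hLM : L ⊆ M) : unfounded π M U := by
  intro a ha r hr har
  exact (hU a ha r hr har).imp
    (Or.imp (fun ⟨b, hb, hbL⟩ ↦ ⟨b, hb, hLM hbL⟩) (fun ⟨b, hb, hbL⟩ ↦ ⟨b, hb, hLM hbL⟩))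
    (Or.imp_right fun ⟨b, hb, hbU, hbL⟩ ↦ ⟨b, hb, hbU, hLM hbL⟩)

theorem unfounded.exists_mem_head_notMem (hU : unfounded π L U) {a : ℕ} (ha : a ∈ U)
    {r : Rule} (hr : r ∈ π) (har : a ∈ r.head) (hpos : ∀ b ∈ r.pos, Lit.neg b ∉ L)
    (hneg : ∀ b ∈ r.neg, Lit.pos b ∉ L) (hposU : ∀ b ∈ r.pos, b ∉ U) :
    ∃ b ∈ r.head, b ∉ U ∧ Lit.pos b ∈ L := by
  obtain (⟨b, hb, hbL⟩ | ⟨b, hb, hbL⟩) | ⟨b, hb, hbU⟩ | hhead := hU a ha r hr har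
  · exact absurd hbL (hpos b hb)
  · exact absurd hbL (hneg b hb)
  · exact absurd hbU (hposU b hb)
  · exact hhead

theorem satReduct.sdiff_unfounded (hsat : satReduct π (posAtoms M) (posAtoms M))
    (hM : consistentSet M) (hU : unfounded π M U) :
    satReduct π (posAtoms M) (posAtoms M \ U) := by
  intro r hr hneg hpos
  obtain ⟨a, har, haM⟩ := hsat r hr hneg fun b hb ↦ (hpos b hb).1
  by_cases haU : a ∈ U
  · obtain ⟨b, hbr, hbU, hbM⟩ := hU.exists_mem_head_notMem haU hr har
      (fun b hb ↦ hM _ (hpos b hb).1) hneg (fun b hb ↦ (hpos b hb).2)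
    exact ⟨b, hbr, hbM, hbU⟩
  · exact ⟨a, har, haM, haU⟩

theorem answerSet.disjoint_of_satReduct_sdiff (hX : answerSet π X)
    (hsat : satReduct π X (X \ U)) : Disjoint X U :=
  sdiff_eq_left.mp (hX.2 _ Set.sdiff_subset hsat)

theorem staModel.disjoint_unfounded (hM : staModel π M) (hU : unfounded π M U) :
    Disjoint (posAtoms M) U := by
  obtain ⟨hcons, -, hans⟩ := hM
  exact hans.disjoint_of_satReduct_sdiff (hans.1.sdiff_unfounded hcons hU)

end

/-- For any unfounded set `U` on a consistent set `L` of literals with respect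
to `π` and any consistent and complete set `M` of literals over `atoms(π)`, if `L ⊆ M` and
`M ∩ U ≠ ∅` (some atom of `U` occurs positively in `M`), then `M` is not a stable model. -/
theorem statement17 (π : Prog) (U : Set ℕ) (L M : Set Lit)
    (hLcons : consistentSet L) (hU : unfounded π L U)
    (hMcons : consistentSet M) (hMcomp : completeOver M ↑(progAtoms π))
    (hsub : L ⊆ M) (hmeet : ∃ a ∈ U, Lit.pos a ∈ M) :
    ¬ staModel π M := by
  intro hM
  obtain ⟨a, haU, haM⟩ := hmeet
  have hdisj : Disjoint (posAtoms M) U := hM.disjoint_unfounded (hU.mono hsub)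
  exact Set.disjoint_left.mp hdisj haM haU

end AbstractSolvers
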